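/- Let E and F be Banach lattices and let T : E → F be sublinear and monotone. Then the quantity ‖T‖ = sup{‖T(f)‖ : f ∈ E, ‖f‖ ≤ 1} is finite and T is Lipschitz continuous with Lipschitz constant ‖T‖, that is, ‖T(f) − T(g)‖ ≤ ‖T‖·‖f − g‖ for all f, g ∈ E. -/

import Mathlib

/-- Every sublinear and monotone operator `T : E → F` between Banach lattices has finite norm
`‖T‖ = sup {‖T f‖ : ‖f‖ ≤ 1}` and is Lipschitz continuous with Lipschitz constant `‖T‖`. -/
theorem lipschitzWith_opNorm_of_sublinear_monotone
    {E F : Type*}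
    [NormedAddCommGroup E] [Lattice E] [HasSolidNorm E] [IsOrderedAddMonoid E] [NormedSpace ℝ E] [CompleteSpace E]
    [NormedAddCommGroup F] [Lattice F] [HasSolidNorm F] [IsOrderedAddMonoid F] [NormedSpace ℝ F] [CompleteSpace F]
    (T : E → F)
    (hsub : ∀ f g : E, T (f + g) ≤ T f + T g)
    (hpos : ∀ (a : ℝ), 0 ≤ a → ∀ f : E, T (a • f) = a • T f)
    (hmono : Monotone T) :
    BddAbove {r : ℝ | ∃ f : E, ‖f‖ ≤ 1 ∧ r = ‖T f‖} ∧
      ∀ f g : E, ‖T f - T g‖ ≤ sSup {r : ℝ | ∃ f : E, ‖f‖ ≤ 1 ∧ r = ‖T f‖} * ‖f - g‖ := by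
  have h0 : T 0 = 0 := by simpa using hpos 0 le_rfl 0
  have hTabs : ∀ f : E, |T f| ≤ T |f| := by
    intro f
    refine abs_le'.2 ⟨hmono (le_abs_self f), ?_⟩
    have h1 : 0 ≤ T f + T (-f) := by
      have := hsub f (-f)
      rwa [add_neg_cancel, h0] at this
    exact (neg_le_iff_add_nonneg'.2 h1).trans (hmono (neg_le_abs f))
  have hdiff : ∀ f g : E, T f - T g ≤ T |f - g| := by
    intro f g
    have h1 := hsub (f - g) g
    rw [sub_add_cancel] at h1
    exact (sub_le_iff_le_add.2 h1).trans (hmono (le_abs_self _))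
  have hbdd : BddAbove {r : ℝ | ∃ f : E, ‖f‖ ≤ 1 ∧ r = ‖T f‖} := by
    by_contra hb
    have hex : ∀ n : ℕ, ∃ f : E, ‖f‖ ≤ 1 ∧ (4 : ℝ) ^ n < ‖T f‖ := by
      intro n
      obtain ⟨r, ⟨f, hf, rfl⟩, hr⟩ := not_bddAbove_iff.1 hb ((4 : ℝ) ^ n)
      exact ⟨f, hf, hr⟩
    choose f hf hT using hex
    let g : ℕ → E := fun n => |((1 / 2 : ℝ) ^ n) • f n|
    have hgn : ∀ n, ‖g n‖ ≤ (1 / 2 : ℝ) ^ n := by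
      intro n
      simp only [g]
      rw [norm_abs_eq_norm, norm_smul, Real.norm_of_nonneg (by positivity)]
      exact mul_le_of_le_one_right (by positivity) (hf n)
    have hsum : Summable g :=
      Summable.of_norm_bounded summable_geometric_two hgn
    have hkey : ∀ n : ℕ, (2 : ℝ) ^ n ≤ ‖T (∑' n, g n)‖ := by
      intro n
      have hle : g n ≤ ∑' n, g n := hsum.le_tsum n (fun _ _ => abs_nonneg _)
      have h1 : |T (((1 / 2 : ℝ) ^ n) • f n)| ≤ |T (∑' n, g n)| :=
        (hTabs _).trans ((hmono hle).trans (le_abs_self _))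
      have h2 := norm_le_norm_of_abs_le_abs h1
      rw [hpos _ (by positivity), norm_smul, Real.norm_of_nonneg (by positivity)] at h2
      refine le_trans ?_ h2
      calc (2 : ℝ) ^ n = (1 / 2 : ℝ) ^ n * 4 ^ n := by rw [← mul_pow]; norm_num
        _ ≤ _ := mul_le_mul_of_nonneg_left (hT n).le (by positivity)
    obtain ⟨n, hn⟩ := pow_unbounded_of_one_lt ‖T (∑' n, g n)‖ (one_lt_two (α := ℝ))
    exact absurd (hkey n) (not_le.2 hn)
  refine ⟨hbdd, fun f g => ?_⟩
  have h1 : |T f - T g| ≤ |T (|f - g|)| := by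
    refine (abs_le'.2 ⟨hdiff f g, ?_⟩).trans (le_abs_self _)
    rw [neg_sub, abs_sub_comm]
    exact hdiff g f
  refine (norm_le_norm_of_abs_le_abs h1).trans ?_
  rw [← norm_abs_eq_norm (f - g)]
  generalize |f - g| = h
  rcases eq_or_ne h 0 with rfl | hne
  · simp [h0]
  have hn : 0 < ‖h‖ := norm_pos_iff.2 hne
  have h2 : T h = ‖h‖ • T (‖h‖⁻¹ • h) := by
    rw [← hpos _ hn.le, smul_smul, mul_inv_cancel₀ hn.ne', one_smul]
  have h3 : ‖T (‖h‖⁻¹ • h)‖ ≤ sSup {r : ℝ | ∃ f : E, ‖f‖ ≤ 1 ∧ r = ‖T f‖} := by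
    refine le_csSup hbdd ⟨_, ?_, rfl⟩
    rw [norm_smul, norm_inv, norm_norm, inv_mul_cancel₀ hn.ne']
  rw [h2, norm_smul, norm_norm, mul_comm]
  exact mul_le_mul_of_nonneg_right h3 hn.le
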